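/- arXiv:math/0111114 — 2 statements merged into one kernel-verified Lean document; each statement's English description precedes it below -/
import Mathlib

section
/- Let E, P ∈ GL(m,k) and F, Q ∈ GL(n,k). Then there is an algebra isomorphism ψ : B(E,F) → B(ᵀP·E·P, ᵀQ·F·Q) determined by ψ(z) = P·y·Q⁻¹ entrywise, i.e. ψ(z_{ij}) = (P·y·Q⁻¹)_{ij}, where z = (z_{ij}) denotes the matrix of generators of B(E,F) and y = (y_{ij}) the matrix of generators of B(ᵀP·E·P, ᵀQ·F·Q); in particular B(E,F) and B(ᵀP·E·P, ᵀQ·F·Q) are isomorphic as k-algebras. -/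
open scoped TensorProduct
open Matrix

noncomputable section

variable (k : Type) [Field k]

/-- The matrix of free generators of the free algebra on `Fin m × Fin n`. -/
def gens (m n : ℕ) : Matrix (Fin m) (Fin n) (FreeAlgebra k (Fin m × Fin n)) :=
  Matrix.of fun i j => FreeAlgebra.ι k (i, j)

/-- A scalar matrix viewed as a matrix over a `k`-algebra. -/
def liftMat {A : Type} [Semiring A] [Algebra k A] {p q : ℕ}
    (M : Matrix (Fin p) (Fin q) k) : Matrix (Fin p) (Fin q) A :=
  M.map (algebraMap k A)

/-- The defining relations of the algebra `B(E,F)`: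
`F⁻¹ * ᵀz * E * z = 1` and `z * F⁻¹ * ᵀz * E = 1`. -/
inductive BRel {m n : ℕ} (E : Matrix (Fin m) (Fin m) k) (F : Matrix (Fin n) (Fin n) k) :
    FreeAlgebra k (Fin m × Fin n) → FreeAlgebra k (Fin m × Fin n) → Prop
  | left (i j : Fin n) : BRel E F
      ((liftMat k (A := FreeAlgebra k (Fin m × Fin n)) F⁻¹ * (gens k m n)ᵀ *
          liftMat k (A := FreeAlgebra k (Fin m × Fin n)) E * gens k m n :
          Matrix (Fin n) (Fin n) (FreeAlgebra k (Fin m × Fin n))) i j)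
      ((1 : Matrix (Fin n) (Fin n) (FreeAlgebra k (Fin m × Fin n))) i j)
  | right (i j : Fin m) : BRel E F
      ((gens k m n * liftMat k (A := FreeAlgebra k (Fin m × Fin n)) F⁻¹ * (gens k m n)ᵀ *
          liftMat k (A := FreeAlgebra k (Fin m × Fin n)) E :
          Matrix (Fin m) (Fin m) (FreeAlgebra k (Fin m × Fin n))) i j)
      ((1 : Matrix (Fin m) (Fin m) (FreeAlgebra k (Fin m × Fin n))) i j)

/-- The algebra `B(E,F)`.  The Hopf algebra `B(E)` is `BB k E E`. -/
abbrev BB {m n : ℕ} (E : Matrix (Fin m) (Fin m) k) (F : Matrix (Fin n) (Fin n) k) :=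
  RingQuot (BRel k E F)

/-- The matrix of generators of `B(E,F)`. -/
def ZMat {m n : ℕ} (E : Matrix (Fin m) (Fin m) k) (F : Matrix (Fin n) (Fin n) k) :
    Matrix (Fin m) (Fin n) (BB k E F) :=
  Matrix.of fun i j => RingQuot.mkAlgHom k (BRel k E F) (gens k m n i j)

/-!
A scalar matrix `E` is a bilinear form, and `W ↦ F⁻¹ ᵀW E` is the adjoint with respect to the forms
`E` and `F`. So `B(E,F)` is the universal algebra over which the forms `F` and `E` become isometric:
its homomorphisms to `A` are the matrices over `A` whose inverse is their adjoint. Replacing `E` and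
`F` by `ᵀP E P` and `ᵀQ F Q` is a change of bases, under which `W` is an isometry exactly when
`P W Q⁻¹` is one for the original forms; the isomorphism follows from the universal property.
-/

section Sandwich

variable {k} {A B : Type} [Semiring A] [Algebra k A] [Semiring B] [Algebra k B] {p q r s t u : ℕ}

/-- The product `M * W * N` of a matrix `W` over a `k`-algebra with scalar matrices `M` and `N`,
that is, the two-sided action of scalar matrices by which bases are changed. -/
def sandwich (M : Matrix (Fin p) (Fin q) k) (W : Matrix (Fin q) (Fin r) A)
    (N : Matrix (Fin r) (Fin s) k) : Matrix (Fin p) (Fin s) A :=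
  liftMat k (A := A) M * W * liftMat k (A := A) N

theorem liftMat_mul (M : Matrix (Fin p) (Fin q) k) (N : Matrix (Fin q) (Fin r) k) :
    liftMat k (A := A) (M * N) = liftMat k (A := A) M * liftMat k (A := A) N :=
  Matrix.map_mul

theorem liftMat_one : liftMat k (A := A) (1 : Matrix (Fin p) (Fin p) k) = 1 :=
  Matrix.map_one _ (map_zero _) (map_one _)

theorem map_liftMat (f : A →ₐ[k] B) (M : Matrix (Fin p) (Fin q) k) :
    (liftMat k (A := A) M).map f = liftMat k (A := B) M := by
  ext i j
  exact f.commutes (M i j)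

theorem transpose_liftMat_mul (M : Matrix (Fin p) (Fin q) k) (W : Matrix (Fin q) (Fin r) A) :
    (liftMat k (A := A) M * W)ᵀ = Wᵀ * liftMat k (A := A) Mᵀ := by
  ext i j
  simp [Matrix.mul_apply, liftMat, Algebra.commutes]

theorem transpose_mul_liftMat (W : Matrix (Fin p) (Fin q) A) (M : Matrix (Fin q) (Fin r) k) :
    (W * liftMat k (A := A) M)ᵀ = liftMat k (A := A) Mᵀ * Wᵀ := by
  ext i j
  simp [Matrix.mul_apply, liftMat, Algebra.commutes]

theorem sandwich_one_one (W : Matrix (Fin p) (Fin q) A) :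
    sandwich (1 : Matrix (Fin p) (Fin p) k) W (1 : Matrix (Fin q) (Fin q) k) = W := by
  rw [sandwich, liftMat_one, liftMat_one, Matrix.one_mul, Matrix.mul_one]

theorem sandwich_sandwich (M : Matrix (Fin p) (Fin q) k) (M' : Matrix (Fin q) (Fin r) k)
    (W : Matrix (Fin r) (Fin s) A) (N' : Matrix (Fin s) (Fin t) k) (N : Matrix (Fin t) (Fin u) k) :
    sandwich M (sandwich M' W N') N = sandwich (M * M') W (N' * N) := by
  simp only [sandwich, liftMat_mul, Matrix.mul_assoc]

theorem transpose_sandwich (M : Matrix (Fin p) (Fin q) k) (W : Matrix (Fin q) (Fin r) A)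
    (N : Matrix (Fin r) (Fin s) k) : (sandwich M W N)ᵀ = sandwich Nᵀ Wᵀ Mᵀ := by
  rw [sandwich, transpose_mul_liftMat, transpose_liftMat_mul, sandwich, Matrix.mul_assoc]

theorem map_sandwich (f : A →ₐ[k] B) (M : Matrix (Fin p) (Fin q) k) (W : Matrix (Fin q) (Fin r) A)
    (N : Matrix (Fin r) (Fin s) k) : (sandwich M W N).map f = sandwich M (W.map f) N := by
  simp only [sandwich, Matrix.map_mul, map_liftMat]

theorem sandwich_mul_sandwich_of_mul_eq_one {N : Matrix (Fin r) (Fin s) k}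
    {N' : Matrix (Fin s) (Fin r) k} (hN : N * N' = 1) (M : Matrix (Fin p) (Fin q) k)
    (V : Matrix (Fin q) (Fin r) A) (W : Matrix (Fin r) (Fin t) A) (M' : Matrix (Fin t) (Fin u) k) :
    sandwich M V N * sandwich N' W M' = sandwich M (V * W) M' :=
  calc sandwich M V N * sandwich N' W M'
      = liftMat k (A := A) M * V * (liftMat k (A := A) N * liftMat k (A := A) N') * W *
          liftMat k (A := A) M' := by
        simp only [sandwich, Matrix.mul_assoc]
    _ = sandwich M (V * W) M' := by
        rw [← liftMat_mul, hN, liftMat_one, Matrix.mul_one, sandwich, Matrix.mul_assoc _ V]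

theorem sandwich_one_of_mul_eq_one {M : Matrix (Fin p) (Fin q) k} {N : Matrix (Fin q) (Fin p) k}
    (h : M * N = 1) : sandwich M (1 : Matrix (Fin q) (Fin q) A) N = 1 := by
  rw [sandwich, Matrix.mul_one, ← liftMat_mul, h, liftMat_one]

theorem sandwich_sandwich_cancel {M : Matrix (Fin p) (Fin q) k} {M' : Matrix (Fin q) (Fin p) k}
    {N' : Matrix (Fin r) (Fin s) k} {N : Matrix (Fin s) (Fin r) k} (hM : M * M' = 1)
    (hN : N' * N = 1) (W : Matrix (Fin p) (Fin r) A) : sandwich M (sandwich M' W N') N = W := by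
  rw [sandwich_sandwich, hM, hN, sandwich_one_one]

theorem sandwich_nonsing_inv_eq_one_iff {M : Matrix (Fin p) (Fin p) k} (hM : IsUnit M.det)
    {W : Matrix (Fin p) (Fin p) A} : sandwich M W M⁻¹ = 1 ↔ W = 1 := by
  have hM' : M⁻¹ * M = 1 := Matrix.nonsing_inv_mul M hM
  constructor
  · intro h
    rw [← sandwich_sandwich_cancel hM' hM' W, h, sandwich_one_of_mul_eq_one hM']
  · rintro rfl
    exact sandwich_one_of_mul_eq_one (Matrix.mul_nonsing_inv M hM)

end Sandwich

section Isometry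

variable {k} {A B : Type} [Semiring A] [Algebra k A] [Semiring B] [Algebra k B] {m n : ℕ}

/-- The adjoint `F⁻¹ ᵀW E` of a matrix `W` over a `k`-algebra, with respect to the bilinear forms
with Gram matrices `E` and `F`. For singular `F` it is `0`, since then `F⁻¹ = 0`. -/
def formAdjoint (E : Matrix (Fin m) (Fin m) k) (F : Matrix (Fin n) (Fin n) k)
    (W : Matrix (Fin m) (Fin n) A) : Matrix (Fin n) (Fin m) A :=
  sandwich F⁻¹ Wᵀ E

/-- `W` is an isometric isomorphism from the form `F` to the form `E` over a `k`-algebra, encoded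
by its adjoint being a two-sided inverse. These are the defining relations of `B(E,F)`. -/
structure IsFormIsometry (E : Matrix (Fin m) (Fin m) k) (F : Matrix (Fin n) (Fin n) k)
    (W : Matrix (Fin m) (Fin n) A) : Prop where
  adjoint_mul_self : formAdjoint E F W * W = 1
  self_mul_adjoint : W * formAdjoint E F W = 1

variable {E P : Matrix (Fin m) (Fin m) k} {F Q : Matrix (Fin n) (Fin n) k}

theorem map_formAdjoint (f : A →ₐ[k] B) (W : Matrix (Fin m) (Fin n) A) :
    (formAdjoint E F W).map f = formAdjoint E F (W.map f) := by
  rw [formAdjoint, map_sandwich, Matrix.transpose_map, formAdjoint]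

theorem self_mul_formAdjoint (W : Matrix (Fin m) (Fin n) A) :
    W * formAdjoint E F W = W * liftMat k (A := A) F⁻¹ * Wᵀ * liftMat k (A := A) E := by
  simp only [formAdjoint, sandwich, Matrix.mul_assoc]

theorem formAdjoint_sandwich (hP : IsUnit P.det) (hQ : IsUnit Q.det)
    (W : Matrix (Fin m) (Fin n) A) :
    formAdjoint E F (sandwich P W Q⁻¹) =
      sandwich Q (formAdjoint (Pᵀ * E * P) (Qᵀ * F * Q) W) P⁻¹ := by
  have mul_inv_form : Q * (Qᵀ * F * Q)⁻¹ = F⁻¹ * Q⁻¹ᵀ := by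
    rw [Matrix.mul_inv_rev, Matrix.mul_nonsing_inv_cancel_left _ _ hQ, Matrix.mul_inv_rev,
      Matrix.transpose_nonsing_inv]
  have form_mul_inv : Pᵀ * E * P * P⁻¹ = Pᵀ * E := Matrix.mul_nonsing_inv_cancel_right _ _ hP
  rw [formAdjoint, transpose_sandwich, sandwich_sandwich, formAdjoint, sandwich_sandwich,
    mul_inv_form, form_mul_inv]

theorem isFormIsometry_sandwich_iff (hP : IsUnit P.det) (hQ : IsUnit Q.det)
    {W : Matrix (Fin m) (Fin n) A} :
    IsFormIsometry E F (sandwich P W Q⁻¹) ↔ IsFormIsometry (Pᵀ * E * P) (Qᵀ * F * Q) W := by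
  have left_iff : formAdjoint E F (sandwich P W Q⁻¹) * sandwich P W Q⁻¹ = 1 ↔
      formAdjoint (Pᵀ * E * P) (Qᵀ * F * Q) W * W = 1 := by
    rw [formAdjoint_sandwich hP hQ,
      sandwich_mul_sandwich_of_mul_eq_one (Matrix.nonsing_inv_mul P hP),
      sandwich_nonsing_inv_eq_one_iff hQ]
  have right_iff : sandwich P W Q⁻¹ * formAdjoint E F (sandwich P W Q⁻¹) = 1 ↔
      W * formAdjoint (Pᵀ * E * P) (Qᵀ * F * Q) W = 1 := by
    rw [formAdjoint_sandwich hP hQ,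
      sandwich_mul_sandwich_of_mul_eq_one (Matrix.nonsing_inv_mul Q hQ),
      sandwich_nonsing_inv_eq_one_iff hP]
  exact ⟨fun h => ⟨left_iff.1 h.1, right_iff.1 h.2⟩, fun h => ⟨left_iff.2 h.1, right_iff.2 h.2⟩⟩

theorem IsFormIsometry.sandwich_inv (hP : IsUnit P.det) (hQ : IsUnit Q.det)
    {W : Matrix (Fin m) (Fin n) A} (hW : IsFormIsometry E F W) :
    IsFormIsometry (Pᵀ * E * P) (Qᵀ * F * Q) (sandwich P⁻¹ W Q) := by
  rwa [← isFormIsometry_sandwich_iff hP hQ, sandwich_sandwich_cancel (Matrix.mul_nonsing_inv P hP)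
    (Matrix.mul_nonsing_inv Q hQ)]

end Isometry

namespace BB

variable {k} {A : Type} [Semiring A] [Algebra k A] {m n : ℕ}
  {E P : Matrix (Fin m) (Fin m) k} {F Q : Matrix (Fin n) (Fin n) k}

theorem forall_bRel_imp_eq_iff (f : FreeAlgebra k (Fin m × Fin n) →ₐ[k] A) :
    (∀ ⦃x y⦄, BRel k E F x y → f x = f y) ↔ IsFormIsometry E F ((gens k m n).map f) := by
  have map_one_matrix (p : ℕ) : (1 : Matrix (Fin p) (Fin p) _).map f = 1 :=
    Matrix.map_one f (map_zero f) (map_one f)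
  constructor
  · intro hf
    constructor
    · rw [← map_formAdjoint, ← Matrix.map_mul, ← map_one_matrix]
      ext i j
      exact hf (.left i j)
    · rw [← map_formAdjoint, ← Matrix.map_mul, ← map_one_matrix, self_mul_formAdjoint]
      ext i j
      exact hf (.right i j)
  · rintro ⟨hleft, hright⟩ x y (⟨i, j⟩ | ⟨i, j⟩)
    · rw [← map_formAdjoint, ← Matrix.map_mul, ← map_one_matrix] at hleft
      exact congr_fun₂ hleft i j
    · rw [← map_formAdjoint, ← Matrix.map_mul, ← map_one_matrix, self_mul_formAdjoint] at hright
      exact congr_fun₂ hright i j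

variable (E F) in
theorem isFormIsometry_zMat : IsFormIsometry E F (ZMat k E F) :=
  (forall_bRel_imp_eq_iff (RingQuot.mkAlgHom k (BRel k E F))).1
    fun _ _ => RingQuot.mkAlgHom_rel k

theorem map_gens_lift (W : Matrix (Fin m) (Fin n) A) :
    (gens k m n).map (FreeAlgebra.lift k fun ij => W ij.1 ij.2) = W := by
  ext i j
  exact FreeAlgebra.lift_ι_apply _ _

/-- The universal property of `B(E,F)`: the homomorphism that sends the matrix of generators to a
given isometry `W`. -/
def lift (W : Matrix (Fin m) (Fin n) A) (hW : IsFormIsometry E F W) : BB k E F →ₐ[k] A :=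
  RingQuot.liftAlgHom k ⟨FreeAlgebra.lift k fun ij => W ij.1 ij.2,
    (forall_bRel_imp_eq_iff _).2 (by rwa [map_gens_lift])⟩

theorem map_zMat_lift (W : Matrix (Fin m) (Fin n) A) (hW : IsFormIsometry E F W) :
    (ZMat k E F).map (lift W hW) = W := by
  ext i j
  exact (RingQuot.liftAlgHom_mkAlgHom_apply k _ _ _).trans (congr_fun₂ (map_gens_lift W) i j)

theorem algHom_ext {f g : BB k E F →ₐ[k] A} (h : (ZMat k E F).map f = (ZMat k E F).map g) :
    f = g := by
  refine RingQuot.ringQuot_ext' k f g (FreeAlgebra.hom_ext ?_)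
  funext ij
  exact congr_fun₂ h ij.1 ij.2

theorem comp_eq_id_of_map_zMat_eq_sandwich {E' P' : Matrix (Fin m) (Fin m) k}
    {F' Q' : Matrix (Fin n) (Fin n) k} {f : BB k E F →ₐ[k] BB k E' F'}
    {g : BB k E' F' →ₐ[k] BB k E F} (hf : (ZMat k E F).map f = sandwich P (ZMat k E' F') Q')
    (hg : (ZMat k E' F').map g = sandwich P' (ZMat k E F) Q) (hP : P' * P = 1) (hQ : Q' * Q = 1) :
    f.comp g = AlgHom.id k (BB k E' F') := by
  apply algHom_ext
  calc (ZMat k E' F').map (f.comp g) = ((ZMat k E' F').map g).map f := Matrix.map_map.symm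
    _ = sandwich P' (sandwich P (ZMat k E' F') Q') Q := by rw [hg, map_sandwich, hf]
    _ = ZMat k E' F' := sandwich_sandwich_cancel hP hQ _
    _ = (ZMat k E' F').map (AlgHom.id k _) := (Matrix.map_id _).symm

variable (E F) in
/-- The isomorphism `B(E,F) ≃ B(ᵀP E P, ᵀQ F Q)` induced by the changes of basis `P` and `Q`. It
sends the matrix of generators `z` to `P y Q⁻¹`, and its inverse sends `y` to `P⁻¹ z Q`. -/
def transposeConjEquiv (hP : IsUnit P.det) (hQ : IsUnit Q.det) :
    BB k E F ≃ₐ[k] BB k (Pᵀ * E * P) (Qᵀ * F * Q) :=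
  AlgEquiv.ofAlgHom
    (lift (sandwich P (ZMat k (Pᵀ * E * P) (Qᵀ * F * Q)) Q⁻¹)
      ((isFormIsometry_sandwich_iff hP hQ).2 (isFormIsometry_zMat _ _)))
    (lift (sandwich P⁻¹ (ZMat k E F) Q) ((isFormIsometry_zMat E F).sandwich_inv hP hQ))
    (comp_eq_id_of_map_zMat_eq_sandwich (map_zMat_lift _ _) (map_zMat_lift _ _)
      (Matrix.nonsing_inv_mul P hP) (Matrix.nonsing_inv_mul Q hQ))
    (comp_eq_id_of_map_zMat_eq_sandwich (map_zMat_lift _ _) (map_zMat_lift _ _)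
      (Matrix.mul_nonsing_inv P hP) (Matrix.mul_nonsing_inv Q hQ))

theorem map_zMat_transposeConjEquiv (hP : IsUnit P.det) (hQ : IsUnit Q.det) :
    (ZMat k E F).map (transposeConjEquiv E F hP hQ) =
      sandwich P (ZMat k (Pᵀ * E * P) (Qᵀ * F * Q)) Q⁻¹ :=
  map_zMat_lift _ _

end BB

/-- **Statement 3.** For `E, P ∈ GL(m,k)` and `F, Q ∈ GL(n,k)`, there is an algebra
isomorphism `ψ : B(E,F) → B(ᵀP·E·P, ᵀQ·F·Q)` with `ψ(z) = P·y·Q⁻¹` entrywise. -/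
theorem BB_pair_iso_transpose_conj {m n : ℕ}
    (E P : Matrix (Fin m) (Fin m) k) (F Q : Matrix (Fin n) (Fin n) k)
    (hE : IsUnit E.det) (hP : IsUnit P.det) (hF : IsUnit F.det) (hQ : IsUnit Q.det) :
    ∃ ψ : BB k E F ≃ₐ[k] BB k (Pᵀ * E * P) (Qᵀ * F * Q),
      ∀ i j, ψ (ZMat k E F i j) =
        (liftMat k (A := BB k (Pᵀ * E * P) (Qᵀ * F * Q)) P * ZMat k (Pᵀ * E * P) (Qᵀ * F * Q) *
          liftMat k (A := BB k (Pᵀ * E * P) (Qᵀ * F * Q)) Q⁻¹ :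
          Matrix (Fin m) (Fin n) (BB k (Pᵀ * E * P) (Qᵀ * F * Q))) i j := by
  exact ⟨BB.transposeConjEquiv E F hP hQ, congr_fun₂ (BB.map_zMat_transposeConjEquiv hP hQ)⟩
end
end

section
/- Let E ∈ GL(m,k) and F ∈ GL(n,k). There exists an algebra homomorphism γ₁ : B(E) → B(E,F) ⊗ B(F,E) with γ₁(a_{ij}) = Σ_{k=1}^n z_{ik} ⊗ y_{kj} for all 1 ≤ i,j ≤ m, and an algebra homomorphism γ₂ : B(F) → B(F,E) ⊗ B(E,F) with γ₂(b_{ij}) = Σ_{k=1}^m y_{ik} ⊗ z_{kj} for all 1 ≤ i,j ≤ n, where a, b, z, y denote the matrices of generators of B(E), B(F), B(E,F), B(F,E) respectively. -/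
open scoped TensorProduct
open Matrix

noncomputable section

variable (k : Type) [Field k]

/-!
An `A`-point of `B(E,F)` is an `m × n` matrix `x` over `A` satisfying the relations of `B(E,F)`.
When `F` is invertible these imply `ᵀx E x = F`, and dually `y G⁻¹ ᵀy = F⁻¹` for a point `y` of
`B(F,G)`. If moreover the entries of `x` commute with those of `y`, then `ᵀ(x y) = ᵀy ᵀx`, and these
identities collapse the relations for `x y` to those for `x` and `y`, so that `x y` is a point of
`B(E,G)`. In `B(E,F) ⊗ B(F,G)` the two matrices of generators have commuting entries, so their
product is such a point.
-/

section Matrices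

theorem transpose_mul_of_commute {l m n A : Type*} [Fintype m] [NonUnitalNonAssocSemiring A]
    {M : Matrix l m A} {N : Matrix m n A} (h : ∀ i j s t, Commute (M i j) (N s t)) :
    (M * N)ᵀ = Nᵀ * Mᵀ := by
  ext i j
  simp only [transpose_apply, mul_apply]
  exact Finset.sum_congr rfl fun s _ => h j s s i

variable {k} {A B : Type} [Semiring A] [Algebra k A] [Semiring B] [Algebra k B]

theorem liftMat_map (f : A →ₐ[k] B) {p q : ℕ} (M : Matrix (Fin p) (Fin q) k) :
    (liftMat k (A := A) M).map f = liftMat k M := by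
  ext i j
  exact f.commutes (M i j)

theorem liftMat_mul_liftMat_inv {p : ℕ} {M : Matrix (Fin p) (Fin p) k} (hM : IsUnit M.det) :
    liftMat k (A := A) M * liftMat k M⁻¹ = 1 := by
  rw [liftMat, liftMat, ← Matrix.map_mul, mul_nonsing_inv _ hM,
    Matrix.map_one _ (map_zero _) (map_one _)]

end Matrices

namespace BB

section Points

variable {m n p : ℕ} (E : Matrix (Fin m) (Fin m) k) (F : Matrix (Fin n) (Fin n) k)
  {G : Matrix (Fin p) (Fin p) k} {A : Type} [Semiring A] [Algebra k A]

local notation "κ" => liftMat k (A := A)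

/-- `x` is an `A`-point of `B(E,F)`: its entries satisfy in `A` the relations imposed on the
generators of `B(E,F)`. -/
structure IsPoint (x : Matrix (Fin m) (Fin n) A) : Prop where
  left : κ F⁻¹ * xᵀ * κ E * x = 1
  right : x * κ F⁻¹ * xᵀ * κ E = 1

variable {k E F} {x : Matrix (Fin m) (Fin n) A} {y : Matrix (Fin n) (Fin p) A}

theorem isPoint_map_gens_iff (f : FreeAlgebra k (Fin m × Fin n) →ₐ[k] A) :
    IsPoint k E F ((gens k m n).map f) ↔ ∀ ⦃a b⦄, BRel k E F a b → f a = f b := by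
  have map_left : (liftMat k (A := FreeAlgebra k (Fin m × Fin n)) F⁻¹ * (gens k m n)ᵀ *
        liftMat k (A := FreeAlgebra k (Fin m × Fin n)) E * gens k m n).map f =
      κ F⁻¹ * ((gens k m n).map f)ᵀ * κ E * (gens k m n).map f := by
    simp only [Matrix.map_mul, liftMat_map, transpose_map]
  have map_right : (gens k m n * liftMat k (A := FreeAlgebra k (Fin m × Fin n)) F⁻¹ *
        (gens k m n)ᵀ * liftMat k (A := FreeAlgebra k (Fin m × Fin n)) E).map f =
      (gens k m n).map f * κ F⁻¹ * ((gens k m n).map f)ᵀ * κ E := by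
    simp only [Matrix.map_mul, liftMat_map, transpose_map]
  have map_one_eq {q : ℕ} : (1 : Matrix (Fin q) (Fin q) _).map f = 1 :=
    Matrix.map_one f (map_zero f) (map_one f)
  constructor
  · rintro ⟨hl, hr⟩ _ _ (⟨i, j⟩ | ⟨i, j⟩)
    · exact congr_fun₂ (map_left.trans (hl.trans map_one_eq.symm)) i j
    · exact congr_fun₂ (map_right.trans (hr.trans map_one_eq.symm)) i j
  · intro h
    constructor
    · rw [← map_left, ← map_one_eq]
      ext i j
      exact h (.left i j)
    · rw [← map_right, ← map_one_eq]
      ext i j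
      exact h (.right i j)

theorem isPoint_ZMat_map (f : BB k E F →ₐ[k] A) : IsPoint k E F ((ZMat k E F).map f) :=
  (isPoint_map_gens_iff (f.comp (RingQuot.mkAlgHom k (BRel k E F)))).2 fun _ _ h =>
    congrArg f (RingQuot.mkAlgHom_rel k h)

theorem gens_map_lift (x : Matrix (Fin m) (Fin n) A) :
    (gens k m n).map (FreeAlgebra.lift k fun q => x q.1 q.2) = x := by
  ext i j
  exact FreeAlgebra.lift_ι_apply _ _

namespace IsPoint

/-- The algebra homomorphism `B(E,F) → A` sending the generators to the entries of an `A`-point. -/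
def lift (hx : IsPoint k E F x) : BB k E F →ₐ[k] A :=
  RingQuot.liftAlgHom k ⟨FreeAlgebra.lift k fun q => x q.1 q.2,
    (isPoint_map_gens_iff _).1 (by rwa [gens_map_lift])⟩

theorem lift_ZMat (hx : IsPoint k E F x) (i : Fin m) (j : Fin n) :
    hx.lift (ZMat k E F i j) = x i j :=
  (RingQuot.liftAlgHom_mkAlgHom_apply ..).trans (congr_fun₂ (gens_map_lift x) i j)

theorem transpose_mul_mul (hx : IsPoint k E F x) (hF : IsUnit F.det) :
    xᵀ * κ E * x = κ F :=
  calc xᵀ * κ E * x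
    _ = κ F * κ F⁻¹ * (xᵀ * κ E * x) := by
      rw [liftMat_mul_liftMat_inv hF, Matrix.one_mul]
    _ = κ F * (κ F⁻¹ * xᵀ * κ E * x) := by
      simp only [Matrix.mul_assoc]
    _ = κ F := by rw [hx.left, Matrix.mul_one]

theorem mul_mul_transpose (hx : IsPoint k E F x) (hE : IsUnit E.det) :
    x * κ F⁻¹ * xᵀ = κ E⁻¹ :=
  calc x * κ F⁻¹ * xᵀ
    _ = x * κ F⁻¹ * xᵀ * (κ E * κ E⁻¹) := by
      rw [liftMat_mul_liftMat_inv hE, Matrix.mul_one]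
    _ = x * κ F⁻¹ * xᵀ * κ E * κ E⁻¹ := by
      simp only [Matrix.mul_assoc]
    _ = κ E⁻¹ := by rw [hx.right, Matrix.one_mul]

theorem mul (hx : IsPoint k E F x) (hy : IsPoint k F G y) (hF : IsUnit F.det)
    (hxy : ∀ i j s t, Commute (x i j) (y s t)) : IsPoint k E G (x * y) where
  left :=
    calc κ G⁻¹ * (x * y)ᵀ * κ E * (x * y)
      _ = κ G⁻¹ * yᵀ * (xᵀ * κ E * x) * y := by
        simp only [transpose_mul_of_commute hxy, Matrix.mul_assoc]
      _ = 1 := by rw [hx.transpose_mul_mul hF, hy.left]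
  right :=
    calc x * y * κ G⁻¹ * (x * y)ᵀ * κ E
      _ = x * (y * κ G⁻¹ * yᵀ) * xᵀ * κ E := by
        simp only [transpose_mul_of_commute hxy, Matrix.mul_assoc]
      _ = 1 := by rw [hy.mul_mul_transpose hF, hx.right]

end IsPoint

end Points

end BB

theorem BB_gamma_homs_general {m n p : ℕ} (E : Matrix (Fin m) (Fin m) k)
    (F : Matrix (Fin n) (Fin n) k) (G : Matrix (Fin p) (Fin p) k) (hF : IsUnit F.det) :
    ∃ γ : BB k E G →ₐ[k] (BB k E F ⊗[k] BB k F G),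
      ∀ i j, γ (ZMat k E G i j) = ∑ l, ZMat k E F i l ⊗ₜ[k] ZMat k F G l j := by
  let inl : BB k E F →ₐ[k] BB k E F ⊗[k] BB k F G := Algebra.TensorProduct.includeLeft
  let inr : BB k F G →ₐ[k] BB k E F ⊗[k] BB k F G := Algebra.TensorProduct.includeRight
  have inl_mul_inr (z : BB k E F) (y : BB k F G) : inl z * inr y = z ⊗ₜ y := by
    simp [inl, inr]
  have commute_inl_inr (z : BB k E F) (y : BB k F G) : Commute (inl z) (inr y) := by
    simp [inl, inr, Commute, SemiconjBy]
  have point : BB.IsPoint k E G ((ZMat k E F).map inl * (ZMat k F G).map inr) :=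
    (BB.isPoint_ZMat_map inl).mul (BB.isPoint_ZMat_map inr) hF
      fun _ _ _ _ => commute_inl_inr _ _
  refine ⟨point.lift, fun i j => ?_⟩
  simp only [point.lift_ZMat, mul_apply, map_apply, inl_mul_inr]

/-- **Statement 7.** There are algebra homomorphisms
`γ₁ : B(E) → B(E,F) ⊗ B(F,E)` with `γ₁(a i j) = ∑ l, z i l ⊗ y l j` and
`γ₂ : B(F) → B(F,E) ⊗ B(E,F)` with `γ₂(b i j) = ∑ l, y i l ⊗ z l j`. -/
theorem BB_gamma_homs {m n : ℕ}
    (E : Matrix (Fin m) (Fin m) k) (F : Matrix (Fin n) (Fin n) k)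
    (hE : IsUnit E.det) (hF : IsUnit F.det) :
    (∃ γ₁ : BB k E E →ₐ[k] (BB k E F ⊗[k] BB k F E),
      ∀ i j, γ₁ (ZMat k E E i j) = ∑ l, ZMat k E F i l ⊗ₜ[k] ZMat k F E l j) ∧
    (∃ γ₂ : BB k F F →ₐ[k] (BB k F E ⊗[k] BB k E F),
      ∀ i j, γ₂ (ZMat k F F i j) = ∑ l, ZMat k F E i l ⊗ₜ[k] ZMat k E F l j) := by
  exact ⟨BB_gamma_homs_general k E F E hF, BB_gamma_homs_general k F E F hE⟩
end
end
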